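/- With the notation and hypotheses of the context, for all λ₁, λ₂ ∈ ℂ one has det[(λ₁I − Z)·X·(λ₂I − Z) + (λ₂ − λ₁)I] = (λ₂ − λ₁)·p(λ₁)·q(λ₂), where p(λ) = fᵀ·adjugate(λI − Z)·v and q(λ) = wᵀ·adjugate(λI − Z)·e. -/

import Mathlib

open Matrix

/-!
Swapping `λ₁` and `λ₂` in `(λ₁I − Z)·X·(λ₂I − Z)` changes it by `(λ₂ − λ₁)·[X, Z]`, so the matrix
on the left-hand side is the rank one perturbation `(λ₂I − Z)·X·(λ₁I − Z) + (λ₂ − λ₁)·e·fᵀ` of a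
singular matrix. By the matrix determinant lemma in its adjugate form, its determinant is the
pairing of `f` with the adjugate of the unperturbed product applied to `(λ₂ − λ₁)·e`. That adjugate
is `adj(λ₁I − Z)·v·wᵀ·adj(λ₂I − Z)`, and the pairing splits at `v·wᵀ`.
-/

section

variable {n R : Type*} [Fintype n] [DecidableEq n] [CommRing R]

-- Multiplying the bordered matrix `[A, u; -vᵀ, 1]`, of determinant `det (A + u vᵀ)`, by
-- `[1, -adj A u; 0, det A]` clears its upper right block without dividing by `det A`.
lemma det_mul_det_add_vecMulVec (A : Matrix n n R) (u v : n → R) :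
    A.det * (A + vecMulVec u v).det = A.det * (A.det + v ⬝ᵥ (A.adjugate *ᵥ u)) := by
  let N := fromBlocks A (replicateCol Unit u) (-replicateRow Unit v) 1
  let T : Matrix (n ⊕ Unit) (n ⊕ Unit) R :=
    fromBlocks 1 (-replicateCol Unit (A.adjugate *ᵥ u)) 0 (A.det • 1)
  let c : Matrix Unit Unit R := of fun _ _ => A.det + v ⬝ᵥ (A.adjugate *ᵥ u)
  have hN : N.det = (A + vecMulVec u v).det := by
    rw [det_fromBlocks_one₂₂, Matrix.mul_neg, sub_neg_eq_add, ← vecMulVec_eq]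
  have hT : T.det = A.det := by simp [T]
  have upper_right : A * -replicateCol Unit (A.adjugate *ᵥ u) +
      replicateCol Unit u * (A.det • (1 : Matrix Unit Unit R)) = 0 := by
    rw [Matrix.mul_neg, ← replicateCol_mulVec, mulVec_mulVec, mul_adjugate, smul_mulVec,
      one_mulVec, Matrix.mul_smul, Matrix.mul_one, replicateCol_smul, neg_add_cancel]
  have lower_right : -replicateRow Unit v * -replicateCol Unit (A.adjugate *ᵥ u) +
      1 * (A.det • (1 : Matrix Unit Unit R)) = c := by
    ext
    simp [c, add_comm]
  have hNT : N * T = fromBlocks A 0 (-replicateRow Unit v) c := by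
    rw [fromBlocks_multiply, upper_right, lower_right]
    simp
  calc A.det * (A + vecMulVec u v).det = (N * T).det := by rw [det_mul, hN, hT, mul_comm]
    _ = A.det * c.det := by rw [hNT, det_fromBlocks_zero₁₂]
    _ = A.det * (A.det + v ⬝ᵥ (A.adjugate *ᵥ u)) := by simp [c]

-- `X + A` has monic, hence regular, determinant over `R[X]` and specializes to `A` at `X = 0`.
lemma det_add_vecMulVec (A : Matrix n n R) (u v : n → R) :
    (A + vecMulVec u v).det = A.det + v ⬝ᵥ (A.adjugate *ᵥ u) := by
  let ev : Polynomial R →+* R := Polynomial.evalRingHom 0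
  have ev_charmatrix : ev.mapMatrix (charmatrix (-A)) = A := by
    ext
    simp [ev, charmatrix, ← smul_one_eq_diagonal]
  have ev_C (x : n → R) : ev ∘ Polynomial.C ∘ x = x := by
    ext
    simp [ev]
  have ev_vecMulVec : ev.mapMatrix (vecMulVec (Polynomial.C ∘ u) (Polynomial.C ∘ v)) =
      vecMulVec u v := by
    ext
    simp [ev, vecMulVec_apply]
  have ev_adjugate_mulVec : ev ∘ ((charmatrix (-A)).adjugate *ᵥ (Polynomial.C ∘ u)) =
      A.adjugate *ᵥ u := by
    ext
    rw [Function.comp_apply, RingHom.map_mulVec, ev_C, ← RingHom.mapMatrix_apply,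
      RingHom.map_adjugate, ev_charmatrix]
  have generic := (charpoly_monic (-A)).isRegular.left <|
    det_mul_det_add_vecMulVec (charmatrix (-A)) (Polynomial.C ∘ u) (Polynomial.C ∘ v)
  have specialized := congrArg ev generic
  rwa [map_add, RingHom.map_det, RingHom.map_det, map_add, ev_charmatrix, ev_vecMulVec,
    RingHom.map_dotProduct, ev_C, ev_adjugate_mulVec] at specialized

lemma det_mul_mul_add_vecMulVec {X : Matrix n n R} {v w : n → R} (hdet : X.det = 0)
    (hvw : X.adjugate = vecMulVec v w) (A B : Matrix n n R) (e f : n → R) :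
    (A * X * B + vecMulVec e f).det =
      (f ⬝ᵥ (B.adjugate *ᵥ v)) * (w ⬝ᵥ (A.adjugate *ᵥ e)) := by
  have hsingular : (A * X * B).det = 0 := by simp [hdet]
  have hadj : (A * X * B).adjugate *ᵥ e =
      (w ⬝ᵥ (A.adjugate *ᵥ e)) • (B.adjugate *ᵥ v) := by
    rw [adjugate_mul_distrib, adjugate_mul_distrib, hvw, ← mulVec_mulVec, ← mulVec_mulVec,
      vecMulVec_mulVec, op_smul_eq_smul, mulVec_smul]
  rw [det_add_vecMulVec, hsingular, zero_add, hadj, dotProduct_smul, smul_eq_mul, mul_comm]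

end

lemma smul_one_sub_mul_mul_smul_one_sub {R A : Type*} [CommRing R] [Ring A] [Algebra R A]
    (x z : A) (a b : R) :
    (a • 1 - z) * x * (b • 1 - z) =
      (b • 1 - z) * x * (a • 1 - z) + (b - a) • (x * z - z * x) := by
  simp only [sub_mul, mul_sub, smul_mul_assoc, mul_smul_comm, one_mul, mul_one, smul_sub,
    sub_smul, smul_smul, mul_comm a b]
  abel

theorem det_two_sided_factor_general {n R : Type*} [Fintype n] [DecidableEq n] [CommRing R]
    (X Z : Matrix n n R) (hdet : X.det = 0) (e f v w : n → R)
    (hef : X * Z - Z * X + 1 = vecMulVec e f) (hvw : X.adjugate = vecMulVec v w) (lam₁ lam₂ : R) :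
    ((lam₁ • (1 : Matrix n n R) - Z) * X * (lam₂ • (1 : Matrix n n R) - Z) +
        (lam₂ - lam₁) • (1 : Matrix n n R)).det =
      (lam₂ - lam₁) *
        (f ⬝ᵥ ((lam₁ • (1 : Matrix n n R) - Z).adjugate *ᵥ v)) *
        (w ⬝ᵥ ((lam₂ • (1 : Matrix n n R) - Z).adjugate *ᵥ e)) := by
  rw [smul_one_sub_mul_mul_smul_one_sub, add_assoc, ← smul_add, hef, ← smul_vecMulVec,
    det_mul_mul_add_vecMulVec hdet hvw, mulVec_smul, dotProduct_smul, smul_eq_mul]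
  ring

/-- `det[(λ₁I − Z)·X·(λ₂I − Z) + (λ₂ − λ₁)I] = (λ₂ − λ₁)·p(λ₁)·q(λ₂)`. -/
theorem det_two_sided_factor (n : ℕ) (hn : 1 ≤ n)
    (X Z : Matrix (Fin n) (Fin n) ℂ)
    (hrank : (X * Z - Z * X + 1).rank = 1)
    (hdet : X.det = 0)
    (e f v w : Fin n → ℂ)
    (hef : X * Z - Z * X + 1 = vecMulVec e f)
    (hvw : X.adjugate = vecMulVec v w)
    (lam₁ lam₂ : ℂ) :
    ((lam₁ • (1 : Matrix (Fin n) (Fin n) ℂ) - Z) * X *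
        (lam₂ • (1 : Matrix (Fin n) (Fin n) ℂ) - Z) +
        (lam₂ - lam₁) • (1 : Matrix (Fin n) (Fin n) ℂ)).det =
      (lam₂ - lam₁) *
        (f ⬝ᵥ ((lam₁ • (1 : Matrix (Fin n) (Fin n) ℂ) - Z).adjugate *ᵥ v)) *
        (w ⬝ᵥ ((lam₂ • (1 : Matrix (Fin n) (Fin n) ℂ) - Z).adjugate *ᵥ e)) :=
  det_two_sided_factor_general X Z hdet e f v w hef hvw lam₁ lam₂
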